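/- Let A : ℝ → ℝ^{n×n} and C : ℝ → ℝ^{m×n} be such that there exist ā ≥ 1 with |Φ_A(t₁, t₂)| ≤ ā for all t₁, t₂ ≥ 0 and c̄ ≥ 1 with |C(t)| ≤ c̄ for all t ≥ 0, and suppose the pair (C, A) is uniformly observable. Define L(t) := Φ_A(t,0) Φ_A(t,0)^T C(t)^T. Then for each connected interconnection Γ = [γ_ij] ∈ ℝ^{p×p}, the solutions x_i of the coupled array ẋ_i(t) = A(t) x_i(t) + L(t) C(t) Σ_{j≠i} γ_ij (x_j(t) − x_i(t)), i = 1,…,p, exponentially synchronize to x̄(t) := (r^T ⊗ Φ_A(t,0)) x(0), where x(0) stacks x_1(0),…,x_p(0) and r ∈ ℝ^p satisfies r^T Γ = 0 and r^T 1 = 1; that is, there exist c, α > 0 with max_i |x_i(t) − x̄(t)| ≤ c e^{−α t} for all t ≥ 0. -/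

import Mathlib

open Matrix MeasureTheory Filter
open scoped Kronecker

noncomputable section

/-- Euclidean norm of a vector. -/
def eunorm {ι : Type*} [Fintype ι] (v : ι → ℝ) : ℝ := Real.sqrt (∑ i, v i ^ 2)

/-- Spectral (induced 2-) norm of a matrix. -/
def specNorm {m n : Type*} [Fintype m] [Fintype n] (M : Matrix m n ℝ) : ℝ :=
  sSup {c : ℝ | ∃ v : n → ℝ, eunorm v ≤ 1 ∧ c = eunorm (M.mulVec v)}

/-- Smallest singular value of a matrix. -/
def sigmaMin {m n : Type*} [Fintype m] [Fintype n] (M : Matrix m n ℝ) : ℝ :=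
  sInf {c : ℝ | ∃ v : n → ℝ, eunorm v = 1 ∧ c = eunorm (M.mulVec v)}

/-- Largest singular value of a matrix. -/
def sigmaMax {m n : Type*} [Fintype m] [Fintype n] (M : Matrix m n ℝ) : ℝ :=
  sSup {c : ℝ | ∃ v : n → ℝ, eunorm v = 1 ∧ c = eunorm (M.mulVec v)}

/-- A continuous-time interconnection matrix. -/
def IsInterconnection {p : ℕ} (Γ : Matrix (Fin p) (Fin p) ℝ) : Prop :=
  (∀ i j, i ≠ j → 0 ≤ Γ i j) ∧
  ∀ i, Γ i i = -∑ j ∈ Finset.univ.filter (fun j => j ≠ i), Γ i j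

/-- Connectedness of the graph of a matrix. -/
def ConnectedMat {p : ℕ} (Γ : Matrix (Fin p) (Fin p) ℝ) : Prop :=
  ∃ v : Fin p, ∀ u : Fin p, Relation.ReflTransGen (fun i j => 0 < Γ i j) u v

/-- Membership in `Q̄_n`: symmetric positive semidefinite with spectral norm at most 1. -/
def InQbar {n : ℕ} (R : Matrix (Fin n) (Fin n) ℝ) : Prop :=
  R.PosSemidef ∧ specNorm R ≤ 1

/-- `δ(ε, T) = min{ε/2, ε³/(240 T⁵)}`. -/
def deltaCT (ε T : ℝ) : ℝ := min (ε / 2) (ε ^ 3 / (240 * T ^ 5))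

/-- Sufficient excitation for `Q : ℝ≥0 → Q_n`. -/
def SuffExcitingCT {n : ℕ} (Q : ℝ → Matrix (Fin n) (Fin n) ℝ) : Prop :=
  ∃ ε T : ℕ → ℝ, (∀ i, 0 < ε i) ∧ (∀ i, 0 < T i) ∧
    (∀ i, ε i ≤ sigmaMin (Matrix.of fun a b =>
      ∫ t in (∑ j ∈ Finset.range i, T j)..((∑ j ∈ Finset.range i, T j) + T i), Q t a b)) ∧
    Tendsto (fun N => ∑ i ∈ Finset.range N, deltaCT (ε i) (T i)) atTop atTop

/-- Persistence of excitation for `Q : ℝ≥0 → Q_n`. -/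
def PersExcitingCT {n : ℕ} (Q : ℝ → Matrix (Fin n) (Fin n) ℝ) : Prop :=
  ∃ ε T : ℝ, 0 < ε ∧ 0 < T ∧ ∀ t : ℝ, 0 ≤ t →
    ε ≤ sigmaMin (Matrix.of fun a b => ∫ s in t..(t + T), Q s a b)

/-- Some interval of length `d` contains all the entries of `x`. -/
def HasSpread {p : ℕ} (x : Fin p → ℝ) (d : ℝ) : Prop :=
  ∃ lo : ℝ, ∀ i, lo ≤ x i ∧ x i ≤ lo + d

theorem pow_nonneg_entries {p : ℕ} {S : Matrix (Fin p) (Fin p) ℝ} (hS : ∀ i j, 0 ≤ S i j)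
    (k : ℕ) (i j : Fin p) : 0 ≤ (S ^ k) i j := by
  induction k generalizing i j with
  | zero => simp only [pow_zero, Matrix.one_apply]; split_ifs <;> norm_num
  | succ k ih =>
    rw [pow_succ, Matrix.mul_apply]
    exact Finset.sum_nonneg fun l _ => mul_nonneg (ih i l) (hS l j)

theorem pow_mulVec_one {p : ℕ} {S : Matrix (Fin p) (Fin p) ℝ} (hS : S *ᵥ 1 = 1) (k : ℕ) :
    (S ^ k) *ᵥ 1 = 1 := by
  induction k with
  | zero => simp
  | succ k ih => rw [pow_succ, ← Matrix.mulVec_mulVec, hS, ih]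

theorem vecMul_pow_eq {p : ℕ} {S : Matrix (Fin p) (Fin p) ℝ} {r : Fin p → ℝ}
    (hS : r ᵥ* S = r) (k : ℕ) : r ᵥ* (S ^ k) = r := by
  induction k with
  | zero => simp
  | succ k ih => rw [pow_succ, ← Matrix.vecMul_vecMul, ih, hS]

theorem pow_entry_pos_of_reachable {p : ℕ} {S : Matrix (Fin p) (Fin p) ℝ}
    (hS : ∀ i j, 0 ≤ S i j) (hd : ∀ i, 0 < S i i) {u v : Fin p}
    (h : Relation.ReflTransGen (fun i j => 0 < S i j) u v) :
    ∃ N : ℕ, ∀ k, N ≤ k → 0 < (S ^ k) u v := by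
  have step : ∀ (k : ℕ) (a b : Fin p), 0 < S a b → 0 < (S ^ k) b v → 0 < (S ^ (k + 1)) a v := by
    intro k a b hab hb
    rw [pow_succ', Matrix.mul_apply]
    exact lt_of_lt_of_le (mul_pos hab hb)
      (Finset.single_le_sum (f := fun l => S a l * (S ^ k) l v)
        (fun l _ => mul_nonneg (hS a l) (pow_nonneg_entries hS k l v)) (Finset.mem_univ b))
  induction h using Relation.ReflTransGen.head_induction_on with
  | refl =>
    refine ⟨0, fun k _ => ?_⟩
    induction k with
    | zero => simp
    | succ k ih => exact step k v v (hd v) (ih (Nat.zero_le k))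
  | head hab _ ih =>
    obtain ⟨N, hN⟩ := ih
    refine ⟨N + 1, fun k hk => ?_⟩
    obtain ⟨l, rfl⟩ : ∃ l, k = l + 1 := ⟨k - 1, by omega⟩
    exact step l _ _ hab (hN l (by omega))

theorem HasSpread.mulVec {p : ℕ} {B : Matrix (Fin p) (Fin p) ℝ} (hB : ∀ i j, 0 ≤ B i j)
    (hB1 : B *ᵥ 1 = 1) {v : Fin p} {η : ℝ} (hη : ∀ u, η ≤ B u v) {x : Fin p → ℝ} {d : ℝ}
    (hx : HasSpread x d) : HasSpread (B *ᵥ x) ((1 - η) * d) := by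
  obtain ⟨lo, h⟩ := hx
  refine ⟨η * x v + (1 - η) * lo, fun i => ?_⟩
  have hsum : ∑ j, B i j = 1 := by
    have := congrFun hB1 i
    simpa [Matrix.mulVec, dotProduct] using this
  have key : ∀ a : ℝ, (B *ᵥ x) i - (η * x v + (1 - η) * a)
      = ∑ j, (B i j - if j = v then η else 0) * (x j - a) := by
    intro a
    simp only [sub_mul, mul_sub, Finset.sum_sub_distrib, ← Finset.sum_mul, hsum, ite_mul, zero_mul,
      Finset.sum_ite_eq', Finset.mem_univ, if_true, Matrix.mulVec, dotProduct]
    ring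
  have hco : ∀ j, 0 ≤ B i j - if j = v then η else 0 := by
    intro j
    split_ifs with hj
    · subst hj; linarith [hη i]
    · simpa using hB i j
  constructor
  · have : 0 ≤ (B *ᵥ x) i - (η * x v + (1 - η) * lo) := by
      rw [key]
      exact Finset.sum_nonneg fun j _ => mul_nonneg (hco j) (by linarith [(h j).1])
    linarith
  · have : (B *ᵥ x) i - (η * x v + (1 - η) * (lo + d)) ≤ 0 := by
      rw [key]
      exact Finset.sum_nonpos fun j _ =>
        mul_nonpos_of_nonneg_of_nonpos (hco j) (by linarith [(h j).2])
    linarith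

/-- Powers of a stochastic matrix with positive diagonal and a globally reachable node converge
to the rank one matrix built from its left invariant vector. -/
theorem exists_pow_close {p : ℕ} {S : Matrix (Fin p) (Fin p) ℝ} {r : Fin p → ℝ}
    (hS : ∀ i j, 0 ≤ S i j) (hd : ∀ i, 0 < S i i) (hS1 : S *ᵥ 1 = 1) (hr : r ᵥ* S = r)
    (hr1 : ∑ i, r i = 1) {v : Fin p}
    (hv : ∀ u, Relation.ReflTransGen (fun i j => 0 < S i j) u v) {δ : ℝ} (hδ : 0 < δ) :
    ∃ K : ℕ, ∀ i j, |(S ^ K) i j - r j| ≤ δ := by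
  choose M hM using fun u => pow_entry_pos_of_reachable hS hd (hv u)
  set N := Finset.univ.sup M with hN
  have hpos : ∀ u, 0 < (S ^ N) u v := fun u => hM u N (Finset.le_sup (Finset.mem_univ u))
  obtain ⟨u₀, hu₀⟩ := (haveI : Nonempty (Fin p) := ⟨v⟩; Finite.exists_min fun u => (S ^ N) u v)
  set η := (S ^ N) u₀ v with hη
  have hη1 : η ≤ 1 := by
    have h1 := congrFun (pow_mulVec_one hS1 N) u₀
    simp only [Matrix.mulVec, dotProduct, Pi.one_apply, mul_one] at h1
    rw [hη, ← h1]
    exact Finset.single_le_sum (f := fun l => (S ^ N) u₀ l)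
      (fun l _ => pow_nonneg_entries hS N u₀ l) (Finset.mem_univ v)
  have hspread : ∀ (x : Fin p → ℝ), HasSpread x 1 → ∀ k : ℕ,
      HasSpread ((S ^ (N * k)) *ᵥ x) ((1 - η) ^ k) := by
    intro x hx k
    induction k with
    | zero => simpa using hx
    | succ k ih =>
      have h := HasSpread.mulVec (pow_nonneg_entries hS N) (pow_mulVec_one hS1 N) hu₀ ih
      rw [Matrix.mulVec_mulVec, ← pow_add] at h
      rw [pow_succ', mul_add, mul_one, add_comm]
      exact h
  have hR : 0 ≤ ∑ j, |r j| := Finset.sum_nonneg fun _ _ => abs_nonneg _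
  obtain ⟨k, hk⟩ := exists_pow_lt_of_lt_one (x := δ / (∑ j, |r j| + 1)) (y := 1 - η)
    (by positivity) (by linarith [hpos u₀])
  refine ⟨N * k, fun i j => ?_⟩
  have hx : HasSpread (Pi.single j (1 : ℝ) : Fin p → ℝ) 1 := by
    refine ⟨0, fun i => ?_⟩
    rw [Pi.single_apply]; split_ifs <;> norm_num
  obtain ⟨lo, hlo⟩ := hspread _ hx k
  have hrj : r j = ∑ l, r l * (S ^ (N * k)) l j := by
    have := congrFun (vecMul_pow_eq hr (N * k)) j
    simpa [Matrix.vecMul, dotProduct] using this.symm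
  have hij : ∀ i, ((S ^ (N * k)) *ᵥ Pi.single j 1) i = (S ^ (N * k)) i j := by
    intro i; simp
  have e : (S ^ (N * k)) i j - r j = ∑ l, r l * ((S ^ (N * k)) i j - (S ^ (N * k)) l j) := by
    simp only [mul_sub, Finset.sum_sub_distrib, ← Finset.sum_mul, hr1, ← hrj, one_mul]
  rw [e]
  calc _ ≤ ∑ l, |r l * ((S ^ (N * k)) i j - (S ^ (N * k)) l j)| := Finset.abs_sum_le_sum_abs _ _
    _ ≤ ∑ l, |r l| * (1 - η) ^ k := by
      refine Finset.sum_le_sum fun l _ => ?_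
      rw [abs_mul]
      refine mul_le_mul_of_nonneg_left ?_ (abs_nonneg _)
      have h1 := hlo i
      have h2 := hlo l
      rw [hij] at h1 h2
      rw [abs_le]; constructor <;> linarith [h1.1, h1.2, h2.1, h2.2]
    _ = (∑ l, |r l|) * (1 - η) ^ k := by rw [Finset.sum_mul]
    _ ≤ (∑ l, |r l|) * (δ / (∑ j, |r j| + 1)) := by gcongr
    _ ≤ δ := by
      rw [mul_div_assoc', div_le_iff₀ (by positivity)]
      nlinarith

theorem dotProduct_sq_le {ι : Type*} [Fintype ι] (u v : ι → ℝ) :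
    (u ⬝ᵥ v) ^ 2 ≤ (u ⬝ᵥ u) * (v ⬝ᵥ v) := by
  simpa [dotProduct, sq] using Finset.sum_mul_sq_le_sq_mul_sq Finset.univ u v

theorem dotProduct_self_nonneg' {ι : Type*} [Fintype ι] (v : ι → ℝ) : 0 ≤ v ⬝ᵥ v :=
  Finset.sum_nonneg fun i _ => mul_self_nonneg (v i)

theorem IsInterconnection.mulVec_one {p : ℕ} {Γ : Matrix (Fin p) (Fin p) ℝ}
    (hΓ : IsInterconnection Γ) : Γ *ᵥ 1 = 0 := by
  ext i
  simp only [Matrix.mulVec, dotProduct, Pi.one_apply, mul_one, Pi.zero_apply]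
  rw [← Finset.sum_filter_add_sum_filter_not Finset.univ (fun j => j ≠ i)]
  simp [Finset.filter_eq', hΓ.2 i]

/-- A quadratic Lyapunov certificate for a connected interconnection, transverse to consensus. -/
theorem exists_lyapunov_matrix {p : ℕ} {Γ : Matrix (Fin p) (Fin p) ℝ}
    (hΓ : IsInterconnection Γ) (hconn : ConnectedMat Γ) {r : Fin p → ℝ}
    (hr1 : r ᵥ* Γ = 0) (hr2 : ∑ i, r i = 1) :
    ∃ (P : Matrix (Fin p) (Fin p) ℝ) (c : ℝ), 0 < c ∧ Pᵀ = P ∧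
      (∀ y, y ⬝ᵥ y ≤ y ⬝ᵥ (P *ᵥ y)) ∧
      ∀ y, r ⬝ᵥ y = 0 → 2 * (y ⬝ᵥ (P *ᵥ (Γ *ᵥ y))) ≤ -c * (y ⬝ᵥ y) := by
  obtain ⟨v, hv⟩ := hconn
  have hp : 0 < (p : ℝ) := by exact_mod_cast (Nat.zero_le _).trans_lt v.2
  have hdiag : ∀ i, Γ i i ≤ 0 := fun i => by
    rw [hΓ.2 i, neg_nonpos]
    exact Finset.sum_nonneg fun j hj => hΓ.1 i j (Ne.symm (Finset.mem_filter.1 hj).2)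
  have hΓ1 := hΓ.mulVec_one
  obtain ⟨h, hh, hhd⟩ : ∃ h : ℝ, 0 < h ∧ ∀ i, 0 < 1 + h * Γ i i := by
    have hs : 0 ≤ ∑ i, -Γ i i := Finset.sum_nonneg fun i _ => by linarith [hdiag i]
    refine ⟨1 / (1 + ∑ i, -Γ i i), by positivity, fun i => ?_⟩
    have : -Γ i i ≤ ∑ i, -Γ i i :=
      Finset.single_le_sum (f := fun i => -Γ i i) (fun i _ => by linarith [hdiag i])
        (Finset.mem_univ i)
    have h2 : (1 : ℝ) + 1 / (1 + ∑ i, -Γ i i) * Γ i i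
        = (1 + ∑ i, -Γ i i + Γ i i) / (1 + ∑ i, -Γ i i) := by field_simp
    rw [h2]
    exact div_pos (by linarith) (by linarith)
  set S : Matrix (Fin p) (Fin p) ℝ := 1 + h • Γ with hSdef
  have hSd : ∀ i, 0 < S i i := fun i => by simpa [hSdef] using hhd i
  have hSoff : ∀ i j, i ≠ j → S i j = h * Γ i j := fun i j hij => by simp [hSdef, hij]
  have hS : ∀ i j, 0 ≤ S i j := fun i j => by
    by_cases hij : i = j
    · subst hij; exact (hSd i).le
    · rw [hSoff i j hij]; exact mul_nonneg hh.le (hΓ.1 i j hij)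
  have hS1 : S *ᵥ 1 = 1 := by
    rw [hSdef, Matrix.add_mulVec, Matrix.smul_mulVec, hΓ1]; simp
  have hrS : r ᵥ* S = r := by
    rw [hSdef, Matrix.vecMul_add, Matrix.vecMul_smul, hr1]; simp
  have hvS : ∀ u, Relation.ReflTransGen (fun i j => 0 < S i j) u v := by
    have hle : ∀ i j, 0 < Γ i j → 0 < S i j := fun i j hij => by
      by_cases h' : i = j
      · subst h'; exact hSd i
      · rw [hSoff i j h']; exact mul_pos hh hij
    exact fun u => Relation.ReflTransGen.mono hle u v (hv u)
  obtain ⟨K, hK⟩ := exists_pow_close hS hSd hS1 hrS hr2 hvS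
    (δ := 1 / (2 * p)) (by positivity)
  have hsmall : ∀ i j, |(S ^ (K + 1)) i j - r j| ≤ 1 / (2 * p) := by
    intro i j
    have hrow : ∑ l, S i l = 1 := by
      have := congrFun hS1 i
      simpa [Matrix.mulVec, dotProduct] using this
    have e : (S ^ (K + 1)) i j - r j = ∑ l, S i l * ((S ^ K) l j - r j) := by
      simp only [mul_sub, Finset.sum_sub_distrib, ← Finset.sum_mul, hrow, one_mul, pow_succ',
        Matrix.mul_apply]
    rw [e]
    calc _ ≤ ∑ l, |S i l * ((S ^ K) l j - r j)| := Finset.abs_sum_le_sum_abs _ _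
      _ ≤ ∑ l, S i l * (1 / (2 * p)) := by
        refine Finset.sum_le_sum fun l _ => ?_
        rw [abs_mul, abs_of_nonneg (hS i l)]
        exact mul_le_mul_of_nonneg_left (hK l j) (hS i l)
      _ = 1 / (2 * p) := by rw [← Finset.sum_mul, hrow, one_mul]
  set P : Matrix (Fin p) (Fin p) ℝ := 1 + ∑ k ∈ Finset.range K, (S ^ (k + 1))ᵀ * S ^ (k + 1)
    with hP
  have hquad : ∀ y z, y ⬝ᵥ (P *ᵥ z)
      = ∑ k ∈ Finset.range (K + 1), ((S ^ k) *ᵥ y) ⬝ᵥ ((S ^ k) *ᵥ z) := by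
    intro y z
    rw [Finset.sum_range_succ', hP, Matrix.add_mulVec, dotProduct_add, Matrix.sum_mulVec,
      dotProduct_sum, add_comm]
    simp only [pow_zero, Matrix.one_mulVec]
    congr 1
    refine Finset.sum_congr rfl fun k _ => ?_
    rw [← Matrix.mulVec_mulVec, Matrix.dotProduct_mulVec, Matrix.vecMul_transpose]
  refine ⟨P, 1 / (2 * h), by positivity, ?_, ?_, ?_⟩
  · rw [hP, Matrix.transpose_add, Matrix.transpose_sum]
    simp
  · intro y
    rw [hquad, Finset.sum_range_succ']
    simp only [pow_zero, Matrix.one_mulVec]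
    have := Finset.sum_nonneg (s := Finset.range K) fun k _ =>
      dotProduct_self_nonneg' ((S ^ (k + 1)) *ᵥ y)
    linarith
  · intro y hy
    have hSy : S *ᵥ y = y + h • (Γ *ᵥ y) := by
      rw [hSdef, Matrix.add_mulVec, Matrix.smul_mulVec, Matrix.one_mulVec]
    have htel : (S *ᵥ y) ⬝ᵥ (P *ᵥ (S *ᵥ y)) - y ⬝ᵥ (P *ᵥ y)
        = ((S ^ (K + 1)) *ᵥ y) ⬝ᵥ ((S ^ (K + 1)) *ᵥ y) - y ⬝ᵥ y := by
      rw [hquad, hquad, ← Finset.sum_sub_distrib]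
      simp only [Matrix.mulVec_mulVec, ← pow_succ]
      rw [Finset.sum_range_sub fun k => ((S ^ k) *ᵥ y) ⬝ᵥ ((S ^ k) *ᵥ y)]
      simp
    have hexp : (S *ᵥ y) ⬝ᵥ (P *ᵥ (S *ᵥ y)) = y ⬝ᵥ (P *ᵥ y)
        + h * (2 * (y ⬝ᵥ (P *ᵥ (Γ *ᵥ y)))) + h ^ 2 * ((Γ *ᵥ y) ⬝ᵥ (P *ᵥ (Γ *ᵥ y))) := by
      have hsymm : (Γ *ᵥ y) ⬝ᵥ (P *ᵥ y) = y ⬝ᵥ (P *ᵥ (Γ *ᵥ y)) := by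
        rw [hquad, hquad]
        exact Finset.sum_congr rfl fun k _ => dotProduct_comm _ _
      rw [hSy, Matrix.mulVec_add, Matrix.mulVec_smul]
      simp only [dotProduct_add, add_dotProduct, dotProduct_smul, smul_dotProduct, smul_eq_mul,
        hsymm]
      ring
    have hnn : 0 ≤ (Γ *ᵥ y) ⬝ᵥ (P *ᵥ (Γ *ᵥ y)) := by
      rw [hquad]
      exact Finset.sum_nonneg fun k _ => dotProduct_self_nonneg' _
    have hent : ∀ i, ((S ^ (K + 1)) *ᵥ y) i ^ 2 ≤ 1 / (4 * p) * (y ⬝ᵥ y) := by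
      intro i
      have e : ((S ^ (K + 1)) *ᵥ y) i = (fun j => (S ^ (K + 1)) i j - r j) ⬝ᵥ y := by
        have : (fun j => (S ^ (K + 1)) i j - r j) = (S ^ (K + 1)) i - r := rfl
        rw [this, sub_dotProduct, hy, sub_zero]
        rfl
      rw [e]
      refine (dotProduct_sq_le _ _).trans
        (mul_le_mul_of_nonneg_right ?_ (dotProduct_self_nonneg' y))
      calc _ ≤ ∑ _j : Fin p, (1 / (2 * p) : ℝ) ^ 2 :=
            Finset.sum_le_sum fun j _ => by
              rw [← sq, ← sq_abs]
              exact pow_le_pow_left₀ (abs_nonneg _) (hsmall i j) 2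
        _ = 1 / (4 * p) := by
          rw [Finset.sum_const, Finset.card_univ, Fintype.card_fin, nsmul_eq_mul]
          field_simp
          norm_num
    have hcontr : ((S ^ (K + 1)) *ᵥ y) ⬝ᵥ ((S ^ (K + 1)) *ᵥ y) ≤ 1 / 4 * (y ⬝ᵥ y) := by
      calc _ ≤ ∑ _i : Fin p, 1 / (4 * p) * (y ⬝ᵥ y) :=
            Finset.sum_le_sum fun i _ => by rw [← sq]; exact hent i
        _ = 1 / 4 * (y ⬝ᵥ y) := by
          rw [Finset.sum_const, Finset.card_univ, Fintype.card_fin, nsmul_eq_mul]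
          field_simp
    have hyy := dotProduct_self_nonneg' y
    have hmain : h * (2 * (y ⬝ᵥ (P *ᵥ (Γ *ᵥ y)))) ≤ -(1 / 2) * (y ⬝ᵥ y) := by
      nlinarith [mul_nonneg (sq_nonneg h) hnn]
    have e : -(1 / (2 * h)) * (y ⬝ᵥ y) = -(1 / 2) * (y ⬝ᵥ y) / h := by field_simp
    rw [e, le_div_iff₀ hh]
    linarith

/-- The squared Frobenius norm. -/
def frobSq {ι κ : Type*} [Fintype ι] [Fintype κ] (M : Matrix ι κ ℝ) : ℝ := ∑ i, ∑ j, M i j ^ 2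

section frobSq

variable {ι κ μ : Type*} [Fintype ι] [Fintype κ] [Fintype μ]

theorem frobSq_nonneg (M : Matrix ι κ ℝ) : 0 ≤ frobSq M :=
  Finset.sum_nonneg fun _ _ => Finset.sum_nonneg fun _ _ => sq_nonneg _

theorem row_le_frobSq (M : Matrix ι κ ℝ) (i : ι) : ∑ j, M i j ^ 2 ≤ frobSq M :=
  Finset.single_le_sum (f := fun i => ∑ j, M i j ^ 2)
    (fun _ _ => Finset.sum_nonneg fun _ _ => sq_nonneg _) (Finset.mem_univ i)

theorem sq_entry_le_frobSq (M : Matrix ι κ ℝ) (i : ι) (j : κ) : M i j ^ 2 ≤ frobSq M :=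
  (Finset.single_le_sum (f := fun j => M i j ^ 2) (fun _ _ => sq_nonneg _)
    (Finset.mem_univ j)).trans (row_le_frobSq M i)

theorem frobSq_transpose (M : Matrix ι κ ℝ) : frobSq Mᵀ = frobSq M := Finset.sum_comm

theorem frobSq_mul_le (M : Matrix ι κ ℝ) (K : Matrix κ μ ℝ) :
    frobSq (M * K) ≤ frobSq M * frobSq K := by
  rw [← frobSq_transpose K]
  simp only [frobSq, Finset.sum_mul_sum]
  refine Finset.sum_le_sum fun i _ => Finset.sum_le_sum fun j _ => ?_
  rw [Matrix.mul_apply, ← Finset.sum_mul_sum]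
  exact Finset.sum_mul_sq_le_sq_mul_sq Finset.univ (M i) fun l => K l j

theorem frobSq_add_le (M K : Matrix ι κ ℝ) : frobSq (M + K) ≤ 2 * frobSq M + 2 * frobSq K := by
  simp only [frobSq, Finset.mul_sum, ← Finset.sum_add_distrib]
  refine Finset.sum_le_sum fun i _ => Finset.sum_le_sum fun j _ => ?_
  rw [Matrix.add_apply]
  nlinarith [sq_nonneg (M i j - K i j)]

theorem frobSq_eq_sum_mulVec (M : Matrix ι κ ℝ) (K : Matrix μ κ ℝ) :
    frobSq (M * Kᵀ) = ∑ i, (K *ᵥ M i) ⬝ᵥ (K *ᵥ M i) := by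
  refine Finset.sum_congr rfl fun i _ => Finset.sum_congr rfl fun j _ => ?_
  rw [sq, Matrix.mul_apply']
  simp only [Matrix.mulVec, dotProduct_comm (M i)]
  rfl

theorem mulVec_dotProduct_mulVec (K : Matrix μ κ ℝ) (v : κ → ℝ) :
    (K *ᵥ v) ⬝ᵥ (K *ᵥ v) = v ⬝ᵥ ((Kᵀ * K) *ᵥ v) := by
  rw [← Matrix.mulVec_mulVec, Matrix.dotProduct_mulVec v, Matrix.vecMul_transpose]

theorem exists_quadratic_upper_bound (P : Matrix ι ι ℝ) :
    ∃ β : ℝ, 0 < β ∧ ∀ y, y ⬝ᵥ (P *ᵥ y) ≤ β * (y ⬝ᵥ y) := by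
  refine ⟨1 + ∑ i, ∑ j, |P i j|,
    by have := Finset.sum_nonneg (s := Finset.univ) fun i _ => Finset.sum_nonneg
        (s := Finset.univ) fun j _ => abs_nonneg (P i j)
       linarith, fun y => ?_⟩
  have hle : ∀ i, y i ^ 2 ≤ y ⬝ᵥ y := fun i => by
    rw [sq]
    exact Finset.single_le_sum (f := fun i => y i * y i) (fun _ _ => mul_self_nonneg _)
      (Finset.mem_univ i)
  have : y ⬝ᵥ (P *ᵥ y) ≤ (∑ i, ∑ j, |P i j|) * (y ⬝ᵥ y) := by
    rw [Finset.sum_mul]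
    refine Finset.sum_le_sum fun i _ => ?_
    rw [Finset.sum_mul, Matrix.mulVec, dotProduct, Finset.mul_sum]
    refine Finset.sum_le_sum fun j _ => ?_
    have h3 : |y i * y j| ≤ y ⬝ᵥ y := by
      rw [abs_le]
      constructor <;> nlinarith [hle i, hle j, sq_nonneg (y i - y j), sq_nonneg (y i + y j)]
    calc y i * (P i j * y j) = P i j * (y i * y j) := by ring
      _ ≤ |P i j * (y i * y j)| := le_abs_self _
      _ = |P i j| * |y i * y j| := abs_mul _ _
      _ ≤ _ := mul_le_mul_of_nonneg_left h3 (abs_nonneg _)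
  have := dotProduct_self_nonneg' y
  linarith

end frobSq

/-- Entrywise derivative of a matrix valued function. -/
def HasEntryDerivAt {ι κ : Type*} (M : ℝ → Matrix ι κ ℝ) (M' : Matrix ι κ ℝ) (t : ℝ) : Prop :=
  ∀ i j, HasDerivAt (fun s => M s i j) (M' i j) t

section HasEntryDerivAt

variable {ι κ μ : Type*}

theorem HasEntryDerivAt.mul [Fintype κ] {M : ℝ → Matrix ι κ ℝ} {M' : Matrix ι κ ℝ}
    {K : ℝ → Matrix κ μ ℝ} {K' : Matrix κ μ ℝ} {t : ℝ} (hM : HasEntryDerivAt M M' t)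
    (hK : HasEntryDerivAt K K' t) :
    HasEntryDerivAt (fun s => M s * K s) (M' * K t + M t * K') t := by
  intro i j
  simp only [Matrix.mul_apply, Matrix.add_apply, ← Finset.sum_add_distrib]
  exact HasDerivAt.fun_sum fun l _ => (hM i l).mul (hK l j)

theorem HasEntryDerivAt.transpose {M : ℝ → Matrix ι κ ℝ} {M' : Matrix ι κ ℝ} {t : ℝ}
    (hM : HasEntryDerivAt M M' t) : HasEntryDerivAt (fun s => (M s)ᵀ) M'ᵀ t :=
  fun i j => hM j i

theorem hasEntryDerivAt_const (M : Matrix ι κ ℝ) (t : ℝ) : HasEntryDerivAt (fun _ => M) 0 t :=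
  fun _ _ => hasDerivAt_const _ _

theorem HasEntryDerivAt.hasDerivAt_trace [Fintype ι] {M : ℝ → Matrix ι ι ℝ} {M' : Matrix ι ι ℝ}
    {t : ℝ} (hM : HasEntryDerivAt M M' t) :
    HasDerivAt (fun s => (M s).trace) M'.trace t :=
  HasDerivAt.fun_sum fun i _ => hM i i

end HasEntryDerivAt

theorem trace_transpose_mul_mul {ι κ : Type*} [Fintype ι] [Fintype κ] (Y : Matrix ι κ ℝ)
    (P : Matrix ι ι ℝ) : (Yᵀ * P * Y).trace = ∑ l, Yᵀ l ⬝ᵥ (P *ᵥ Yᵀ l) := by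
  refine Finset.sum_congr rfl fun l _ => ?_
  rw [Matrix.diag_apply, Matrix.mul_assoc, Matrix.mul_apply']
  rfl

theorem frobSq_eq_sum_columns {ι κ : Type*} [Fintype ι] [Fintype κ] (Y : Matrix ι κ ℝ) :
    frobSq Y = ∑ l, Yᵀ l ⬝ᵥ Yᵀ l := by
  rw [← frobSq_transpose]
  exact Finset.sum_congr rfl fun l _ => Finset.sum_congr rfl fun i _ => sq _

theorem intervalIntegrable_fun_sum {ι : Type*} [Fintype ι] {f : ι → ℝ → ℝ} {s u : ℝ}
    (h : ∀ i, IntervalIntegrable (f i) volume s u) :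
    IntervalIntegrable (fun τ => ∑ i, f i τ) volume s u := by
  simpa only [Finset.sum_fn] using IntervalIntegrable.sum Finset.univ fun i _ => h i

/-- A Cauchy–Schwarz bound for the increment of a function in terms of its derivative. -/
theorem sq_increment_le {g g' f : ℝ → ℝ} {t T K s : ℝ} (hT : 0 < T) (hK : 0 ≤ K)
    (hg : ∀ τ ∈ Set.Icc t (t + T), HasDerivAt g (g' τ) τ)
    (hbound : ∀ τ ∈ Set.Icc t (t + T), g' τ ^ 2 ≤ K * f τ)
    (hf : IntervalIntegrable f volume t (t + T)) (hf0 : ∀ τ, 0 ≤ f τ)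
    (hs : s ∈ Set.Icc t (t + T)) :
    (g s - g t) ^ 2 ≤ T * K * ∫ τ in t..(t + T), f τ := by
  set lam := (g s - g t) / T with hlam
  have hsub : Set.Icc t s ⊆ Set.Icc t (t + T) := Set.Icc_subset_Icc_right hs.2
  have hfs : IntervalIntegrable f volume t s :=
    hf.mono_set (by rw [Set.uIcc_of_le hs.1, Set.uIcc_of_le (by linarith)]; exact hsub)
  have hint : IntervalIntegrable (fun τ => lam ^ 2 + K * f τ) volume t s :=
    intervalIntegrable_const.add (hfs.const_mul K)
  have h1 := intervalIntegral.sub_le_integral_of_hasDeriv_right_of_le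
    (g := fun τ => 2 * lam * g τ) (g' := fun τ => 2 * lam * g' τ)
    (φ := fun τ => lam ^ 2 + K * f τ) hs.1
    (fun τ hτ => (((hg τ (hsub hτ)).const_mul (2 * lam)).continuousAt).continuousWithinAt)
    (fun τ hτ => ((hg τ (hsub (Set.Ioo_subset_Icc_self hτ))).const_mul
      (2 * lam)).hasDerivWithinAt)
    ((intervalIntegrable_iff_integrableOn_Icc_of_le hs.1).1 hint)
    (fun τ hτ => by
      have := hbound τ (hsub (Set.Ioo_subset_Icc_self hτ))
      nlinarith [sq_nonneg (lam - g' τ)])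
  rw [intervalIntegral.integral_add intervalIntegrable_const (hfs.const_mul K),
    intervalIntegral.integral_const, intervalIntegral.integral_const_mul, smul_eq_mul] at h1
  have h2 : ∫ τ in t..s, f τ ≤ ∫ τ in t..(t + T), f τ :=
    intervalIntegral.integral_mono_interval le_rfl hs.1 hs.2
      (Filter.Eventually.of_forall hf0) hf
  have h3 : (s - t) * lam ^ 2 ≤ T * lam ^ 2 :=
    mul_le_mul_of_nonneg_right (by linarith [hs.2]) (sq_nonneg _)
  have h4 : g s - g t = T * lam := by rw [hlam]; field_simp
  have h5 : T * lam ^ 2 ≤ K * ∫ τ in t..(t + T), f τ := by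
    have h6 := mul_le_mul_of_nonneg_left h2 hK
    have h7 : 2 * lam * g s - 2 * lam * g t = 2 * (T * lam ^ 2) := by
      rw [← mul_sub, h4]; ring
    linarith
  rw [h4]
  nlinarith

theorem exp_bound_of_contraction {V : ℝ → ℝ} {T ρ : ℝ} (hT : 0 < T) (hρ0 : 0 < ρ) (hρ1 : ρ < 1)
    (hV : ∀ t, 0 ≤ t → 0 ≤ V t) (hmono : ∀ s t, 0 ≤ s → s ≤ t → V t ≤ V s)
    (hstep : ∀ t, 0 ≤ t → V (t + T) ≤ ρ * V t) :
    ∃ c α : ℝ, 0 < c ∧ 0 < α ∧ ∀ t, 0 ≤ t → V t ≤ c * Real.exp (-α * t) := by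
  have hlog : Real.log ρ < 0 := Real.log_neg hρ0 hρ1
  have hiter : ∀ k : ℕ, V (k * T) ≤ ρ ^ k * V 0 := by
    intro k
    induction k with
    | zero => simp
    | succ k ih =>
      have h := hstep (k * T) (by positivity)
      calc V ((k + 1 : ℕ) * T) = V (k * T + T) := by push_cast; ring_nf
        _ ≤ ρ * V (k * T) := h
        _ ≤ ρ * (ρ ^ k * V 0) := mul_le_mul_of_nonneg_left ih hρ0.le
        _ = _ := by ring
  have hV0 := hV 0 le_rfl
  refine ⟨(V 0 + 1) / ρ, -Real.log ρ / T, by positivity,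
    div_pos (by linarith) hT, fun t ht => ?_⟩
  have hfl := Nat.floor_le (div_nonneg ht hT.le)
  have hfl2 := Nat.lt_floor_add_one (t / T)
  set k := ⌊t / T⌋₊
  have hkt : k * T ≤ t := by rwa [le_div_iff₀ hT] at hfl
  have hpow : ρ ^ k ≤ Real.exp (-(-Real.log ρ / T) * t) / ρ := by
    rw [le_div_iff₀ hρ0, ← pow_succ, ← Real.exp_log (pow_pos hρ0 _), Real.log_pow,
      Real.exp_le_exp]
    have : -(-Real.log ρ / T) * t = t / T * Real.log ρ := by field_simp
    rw [this]
    push_cast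
    exact mul_le_mul_of_nonpos_right hfl2.le hlog.le
  calc V t ≤ V (k * T) := hmono _ _ (by positivity) hkt
    _ ≤ ρ ^ k * V 0 := hiter k
    _ ≤ Real.exp (-(-Real.log ρ / T) * t) / ρ * (V 0 + 1) :=
      mul_le_mul hpow (by linarith) hV0 (by positivity)
    _ = _ := by ring

/-- Exponential decay of the disagreement under a persistently exciting coupling `Nᵀ N`. -/
theorem exp_decay_of_persistent_excitation {n m p : ℕ} {N : ℝ → Matrix (Fin m) (Fin n) ℝ}
    {b T ε : ℝ} (hT : 0 < T) (hε : 0 < ε)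
    (hN : ∀ t, 0 ≤ t → frobSq (N t) ≤ b)
    (hNint : ∀ i j s u, IntervalIntegrable (fun τ => ((N τ)ᵀ * N τ) i j) volume s u)
    (hPE : ∀ t, 0 ≤ t → ∀ v : Fin n → ℝ,
      ε * (v ⬝ᵥ v) ≤ ∫ τ in t..(t + T), (N τ *ᵥ v) ⬝ᵥ (N τ *ᵥ v))
    {Γ P : Matrix (Fin p) (Fin p) ℝ} {r : Fin p → ℝ} {c : ℝ} (hc : 0 < c) (hP : Pᵀ = P)
    (hPlow : ∀ y, y ⬝ᵥ y ≤ y ⬝ᵥ (P *ᵥ y))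
    (hPΓ : ∀ y, r ⬝ᵥ y = 0 → 2 * (y ⬝ᵥ (P *ᵥ (Γ *ᵥ y))) ≤ -c * (y ⬝ᵥ y))
    {W : ℝ → Matrix (Fin p) (Fin n) ℝ}
    (hW : ∀ t, 0 ≤ t → HasEntryDerivAt W (Γ * W t * ((N t)ᵀ * N t)) t)
    (hWr : ∀ t, 0 ≤ t → r ᵥ* W t = 0) :
    ∃ c α : ℝ, 0 < c ∧ 0 < α ∧ ∀ t, 0 ≤ t → frobSq (W t) ≤ c * Real.exp (-α * t) := by
  obtain ⟨β, hβ, hPup⟩ := exists_quadratic_upper_bound P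
  have hb : 0 ≤ b := (frobSq_nonneg _).trans (hN 0 le_rfl)
  set f : ℝ → ℝ := fun t => frobSq (W t * (N t)ᵀ) with hf
  have hf0 : ∀ t, 0 ≤ f t := fun t => frobSq_nonneg _
  set V : ℝ → ℝ := fun t => ((W t)ᵀ * P * W t).trace with hV
  have hVlow : ∀ t, frobSq (W t) ≤ V t := fun t => by
    rw [hV, frobSq_eq_sum_columns]
    simp only [trace_transpose_mul_mul]
    exact Finset.sum_le_sum fun l _ => hPlow _
  have hVup : ∀ t, V t ≤ β * frobSq (W t) := fun t => by
    rw [hV, frobSq_eq_sum_columns, Finset.mul_sum]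
    simp only [trace_transpose_mul_mul]
    exact Finset.sum_le_sum fun l _ => hPup _
  have hV0 : ∀ t, 0 ≤ V t := fun t => (frobSq_nonneg _).trans (hVlow t)
  have hWcont : ∀ t u, 0 ≤ t → 0 ≤ u → ∀ i a, ContinuousOn (fun s => W s i a) (Set.uIcc t u) :=
    fun t u ht hu i a s hs =>
      (hW s (le_trans (le_min ht hu) hs.1) i a).continuousAt.continuousWithinAt
  have hmulVec_int : ∀ t u (g h : Fin n → ℝ → ℝ), (∀ a, ContinuousOn (g a) (Set.uIcc t u)) →
      (∀ a, ContinuousOn (h a) (Set.uIcc t u)) → IntervalIntegrable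
        (fun τ => (fun a => g a τ) ⬝ᵥ (((N τ)ᵀ * N τ) *ᵥ fun a => h a τ)) volume t u := by
    intro t u g h hg hh
    simp only [dotProduct, Matrix.mulVec, Finset.mul_sum]
    refine intervalIntegrable_fun_sum fun a => intervalIntegrable_fun_sum fun a' => ?_
    exact ((hNint a a' t u).mul_continuousOn (hh a')).continuousOn_mul (hg a)
  have hfint : ∀ t u, 0 ≤ t → 0 ≤ u → IntervalIntegrable f volume t u := by
    intro t u ht hu
    simp only [hf, frobSq_eq_sum_mulVec, mulVec_dotProduct_mulVec]
    exact intervalIntegrable_fun_sum fun i =>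
      hmulVec_int t u _ _ (hWcont t u ht hu i) (hWcont t u ht hu i)
  have hVderiv : ∀ t, 0 ≤ t → ∃ V', HasDerivAt V V' t ∧ V' ≤ -c * f t := by
    intro t ht
    have h := (((hW t ht).transpose.mul (hasEntryDerivAt_const P t)).mul (hW t ht)).hasDerivAt_trace
    refine ⟨_, h, ?_⟩
    set Y := W t * (N t)ᵀ with hY
    have h1 : ((W t)ᵀ * P * (Γ * W t * ((N t)ᵀ * N t))).trace = (Yᵀ * (P * Γ) * Y).trace := by
      rw [hY, Matrix.transpose_mul, Matrix.transpose_transpose]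
      have e1 : (W t)ᵀ * P * (Γ * W t * ((N t)ᵀ * N t))
          = ((W t)ᵀ * P * Γ * W t * (N t)ᵀ) * N t := by simp only [Matrix.mul_assoc]
      rw [e1, Matrix.trace_mul_comm]
      simp only [Matrix.mul_assoc]
    have h2 : ((Γ * W t * ((N t)ᵀ * N t))ᵀ * P * W t).trace = (Yᵀ * (P * Γ) * Y).trace := by
      rw [← h1, ← Matrix.trace_transpose]
      simp only [Matrix.transpose_mul, Matrix.transpose_transpose, hP, Matrix.mul_assoc]
    rw [Matrix.mul_zero, add_zero, Matrix.trace_add, h1, h2, trace_transpose_mul_mul]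
    simp only [hf, ← hY, frobSq_eq_sum_columns]
    rw [← two_mul, Finset.mul_sum, Finset.mul_sum]
    refine Finset.sum_le_sum fun l _ => ?_
    rw [← Matrix.mulVec_mulVec]
    refine hPΓ _ ?_
    have : r ⬝ᵥ Yᵀ l = (r ᵥ* Y) l := rfl
    rw [this, hY, ← Matrix.vecMul_vecMul, hWr t ht, Matrix.zero_vecMul]
    rfl
  choose! V' hV' hV'le using hVderiv
  have hVdec : ∀ t u, 0 ≤ t → t ≤ u → V u - V t ≤ ∫ τ in t..u, -c * f τ := by
    intro t u ht htu
    exact intervalIntegral.sub_le_integral_of_hasDeriv_right_of_le htu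
      (fun τ hτ => (hV' τ (ht.trans hτ.1)).continuousAt.continuousWithinAt)
      (fun τ hτ => (hV' τ (ht.trans hτ.1.le)).hasDerivWithinAt)
      ((intervalIntegrable_iff_integrableOn_Icc_of_le htu).1
        ((hfint t u ht (ht.trans htu)).const_mul (-c)))
      (fun τ hτ => hV'le τ (ht.trans hτ.1.le))
  set κ₁ := p * n * (T * (frobSq Γ * b)) with hκ₁
  have hκ₁0 : 0 ≤ κ₁ := by have := frobSq_nonneg Γ; positivity
  set κ := 2 + 2 * b * κ₁ * T with hκ
  have hκ0 : 0 < κ := by positivity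
  have hexc : ∀ t, 0 ≤ t → ε * frobSq (W t) ≤ κ * ∫ τ in t..(t + T), f τ := by
    intro t ht
    set F := ∫ τ in t..(t + T), f τ with hF
    have htT : t ≤ t + T := by linarith
    have hfi := hfint t (t + T) ht (by linarith)
    have hdrift : ∀ s ∈ Set.Icc t (t + T), frobSq (W t - W s) ≤ κ₁ * F := by
      intro s hs
      have hent : ∀ i a, (W t - W s) i a ^ 2 ≤ T * (frobSq Γ * b) * F := by
        intro i a
        have h := sq_increment_le (g := fun s => W s i a)
          (g' := fun τ => (Γ * W τ * ((N τ)ᵀ * N τ)) i a) (f := f) hT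
          (mul_nonneg (frobSq_nonneg Γ) hb)
          (fun τ hτ => hW τ (ht.trans hτ.1) i a) (fun τ hτ => ?_) hfi hf0 hs
        · rw [Matrix.sub_apply, ← neg_sub, neg_sq]
          exact h
        · have e : Γ * W τ * ((N τ)ᵀ * N τ) = Γ * (W τ * (N τ)ᵀ) * N τ := by
            simp only [Matrix.mul_assoc]
          calc _ ≤ frobSq (Γ * W τ * ((N τ)ᵀ * N τ)) := sq_entry_le_frobSq _ i a
            _ ≤ frobSq (Γ * (W τ * (N τ)ᵀ)) * frobSq (N τ) := by rw [e]; exact frobSq_mul_le _ _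
            _ ≤ (frobSq Γ * f τ) * b :=
              mul_le_mul (frobSq_mul_le _ _) (hN τ (ht.trans hτ.1)) (frobSq_nonneg _)
                (mul_nonneg (frobSq_nonneg _) (hf0 τ))
            _ = _ := by ring
      calc frobSq (W t - W s) ≤ ∑ _i : Fin p, ∑ _a : Fin n, T * (frobSq Γ * b) * F :=
            Finset.sum_le_sum fun i _ => Finset.sum_le_sum fun a _ => hent i a
        _ = κ₁ * F := by simp [hκ₁]; ring
    have hfrozen : IntervalIntegrable (fun τ => frobSq (W t * (N τ)ᵀ)) volume t (t + T) := by
      simp only [frobSq_eq_sum_mulVec, mulVec_dotProduct_mulVec]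
      exact intervalIntegrable_fun_sum fun i =>
        hmulVec_int _ _ _ _ (fun _ => continuousOn_const) (fun _ => continuousOn_const)
    calc ε * frobSq (W t) ≤ ∫ τ in t..(t + T), frobSq (W t * (N τ)ᵀ) := by
          simp only [frobSq_eq_sum_mulVec]
          rw [intervalIntegral.integral_finsetSum]
          · rw [frobSq, Finset.mul_sum]
            refine Finset.sum_le_sum fun i _ => ?_
            have := hPE t ht (W t i)
            simpa [dotProduct, sq] using this
          · intro i _
            simp only [mulVec_dotProduct_mulVec]
            exact hmulVec_int _ _ _ _ (fun _ => continuousOn_const) (fun _ => continuousOn_const)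
      _ ≤ ∫ τ in t..(t + T), (2 * f τ + 2 * b * (κ₁ * F)) := by
          refine intervalIntegral.integral_mono_on htT hfrozen
            ((hfi.const_mul 2).add intervalIntegrable_const) fun τ hτ => ?_
          have e : W t * (N τ)ᵀ = W τ * (N τ)ᵀ + (W t - W τ) * (N τ)ᵀ := by
            rw [← Matrix.add_mul]; simp
          have h2 : frobSq ((W t - W τ) * (N τ)ᵀ) ≤ κ₁ * F * b := by
            refine (frobSq_mul_le _ _).trans ?_
            rw [frobSq_transpose]
            exact mul_le_mul (hdrift τ hτ) (hN τ (ht.trans hτ.1)) (frobSq_nonneg _)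
              ((frobSq_nonneg _).trans (hdrift τ hτ))
          rw [e]
          refine (frobSq_add_le _ _).trans ?_
          simp only [hf]
          linarith
      _ = κ * F := by
          rw [intervalIntegral.integral_add (hfi.const_mul 2) intervalIntegrable_const,
            intervalIntegral.integral_const_mul, intervalIntegral.integral_const, smul_eq_mul, hκ]
          ring
  set δ := min (c * (ε / (κ * β))) (1 / 2) with hδ
  have hδ0 : 0 < δ := lt_min (by positivity) (by norm_num)
  have hδ1 : δ ≤ 1 / 2 := min_le_right _ _
  obtain ⟨C, α, hC, hα, h⟩ := exp_bound_of_contraction (V := V) (ρ := 1 - δ) hT (by linarith)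
    (by linarith) (fun t _ => hV0 t)
    (fun s t hs hst => by
      have h1 := hVdec s t hs hst
      have h2 : 0 ≤ ∫ τ in s..t, f τ :=
        intervalIntegral.integral_nonneg hst fun τ _ => hf0 τ
      rw [intervalIntegral.integral_const_mul] at h1
      nlinarith)
    (fun t ht => by
      have h1 := hVdec t (t + T) ht (by linarith)
      rw [intervalIntegral.integral_const_mul] at h1
      have h2 := hexc t ht
      have h3 : ε / (κ * β) * V t ≤ ∫ τ in t..(t + T), f τ := by
        rw [div_mul_eq_mul_div, div_le_iff₀ (by positivity)]
        have := mul_le_mul_of_nonneg_left (hVup t) hε.le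
        nlinarith [mul_le_mul_of_nonneg_left h2 hβ.le]
      have h4 : δ * V t ≤ c * (ε / (κ * β)) * V t :=
        mul_le_mul_of_nonneg_right (min_le_left _ _) (hV0 t)
      nlinarith [mul_le_mul_of_nonneg_left h3 hc.le])
  exact ⟨C, α, hC, hα, fun t ht => (hVlow t).trans (h t ht)⟩

theorem eunorm_nonneg {ι : Type*} [Fintype ι] (v : ι → ℝ) : 0 ≤ eunorm v := Real.sqrt_nonneg _

theorem eunorm_sq {ι : Type*} [Fintype ι] (v : ι → ℝ) : eunorm v ^ 2 = v ⬝ᵥ v := by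
  rw [eunorm, Real.sq_sqrt (Finset.sum_nonneg fun i _ => sq_nonneg _)]
  exact Finset.sum_congr rfl fun i _ => sq _

theorem eunorm_smul {ι : Type*} [Fintype ι] (c : ℝ) (v : ι → ℝ) :
    eunorm (c • v) = |c| * eunorm v := by
  rw [← abs_of_nonneg (eunorm_nonneg (c • v)), ← abs_of_nonneg (eunorm_nonneg v), ← abs_mul,
    ← sq_eq_sq_iff_abs_eq_abs, mul_pow, eunorm_sq, eunorm_sq]
  simp only [dotProduct_smul, smul_dotProduct, smul_eq_mul]
  ring

theorem eunorm_pos {ι : Type*} [Fintype ι] {v : ι → ℝ} (hv : v ≠ 0) : 0 < eunorm v := by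
  refine lt_of_le_of_ne (eunorm_nonneg v) fun h => hv ?_
  have := eunorm_sq v
  rw [← h] at this
  exact dotProduct_self_eq_zero.1 (by simpa using this.symm)

theorem eunorm_normalize {ι : Type*} [Fintype ι] {v : ι → ℝ} (hv : v ≠ 0) :
    eunorm ((eunorm v)⁻¹ • v) = 1 := by
  rw [eunorm_smul, abs_of_nonneg (inv_nonneg.2 (eunorm_nonneg v)),
    inv_mul_cancel₀ (eunorm_pos hv).ne']

theorem dotProduct_mulVec_self_le_frobSq {ι κ : Type*} [Fintype ι] [Fintype κ]
    (M : Matrix ι κ ℝ) (v : κ → ℝ) : (M *ᵥ v) ⬝ᵥ (M *ᵥ v) ≤ frobSq M * (v ⬝ᵥ v) := by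
  rw [frobSq, Finset.sum_mul]
  refine Finset.sum_le_sum fun i _ => ?_
  rw [← sq]
  refine (dotProduct_sq_le _ _).trans_eq ?_
  simp [dotProduct, sq]

theorem eunorm_mulVec_le_of_specNorm_le {ι κ : Type*} [Fintype ι] [Fintype κ]
    {M : Matrix ι κ ℝ} {b : ℝ} (h : specNorm M ≤ b) (v : κ → ℝ) :
    eunorm (M *ᵥ v) ≤ b * eunorm v := by
  by_cases hv : v = 0
  · subst hv; simp [eunorm]
  have hbdd : BddAbove {c : ℝ | ∃ v : κ → ℝ, eunorm v ≤ 1 ∧ c = eunorm (M *ᵥ v)} := by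
    refine ⟨frobSq M + 1, ?_⟩
    rintro _ ⟨u, hu, rfl⟩
    have h1 := dotProduct_mulVec_self_le_frobSq M u
    rw [← eunorm_sq, ← eunorm_sq] at h1
    have h2 := frobSq_nonneg M
    have h3 : eunorm u ^ 2 ≤ 1 := pow_le_one₀ (eunorm_nonneg u) hu
    nlinarith [eunorm_nonneg (M *ᵥ u)]
  have h1 : eunorm (M *ᵥ ((eunorm v)⁻¹ • v)) ≤ b :=
    (le_csSup hbdd ⟨_, (eunorm_normalize hv).le, rfl⟩).trans h
  rwa [Matrix.mulVec_smul, eunorm_smul, abs_of_nonneg (inv_nonneg.2 (eunorm_nonneg v)),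
    inv_mul_le_iff₀ (eunorm_pos hv), mul_comm] at h1

theorem mul_eunorm_le_of_le_sigmaMin {ι κ : Type*} [Fintype ι] [Fintype κ]
    {M : Matrix ι κ ℝ} {ε : ℝ} (h : ε ≤ sigmaMin M) (v : κ → ℝ) :
    ε * eunorm v ≤ eunorm (M *ᵥ v) := by
  by_cases hv : v = 0
  · subst hv; simp [eunorm]
  have hbdd : BddBelow {c : ℝ | ∃ v : κ → ℝ, eunorm v = 1 ∧ c = eunorm (M *ᵥ v)} := by
    refine ⟨0, ?_⟩
    rintro _ ⟨u, _, rfl⟩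
    exact eunorm_nonneg _
  have h1 : ε ≤ eunorm (M *ᵥ ((eunorm v)⁻¹ • v)) :=
    h.trans (csInf_le hbdd ⟨_, eunorm_normalize hv, rfl⟩)
  rwa [Matrix.mulVec_smul, eunorm_smul, abs_of_nonneg (inv_nonneg.2 (eunorm_nonneg v)),
    le_inv_mul_iff₀ (eunorm_pos hv), mul_comm] at h1

theorem HasEntryDerivAt.continuousAt {ι κ : Type*} {M : ℝ → Matrix ι κ ℝ} {M' : Matrix ι κ ℝ}
    {t : ℝ} (hM : HasEntryDerivAt M M' t) : ContinuousAt M t :=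
  continuousAt_pi.2 fun i => continuousAt_pi.2 fun j => (hM i j).continuousAt

theorem ContinuousAt.eventually_isUnit_det {ι : Type*} [Fintype ι] [DecidableEq ι]
    {M : ℝ → Matrix ι ι ℝ} {t : ℝ} (hM : ContinuousAt M t) (h : IsUnit (M t).det) :
    ∀ᶠ s in nhds t, IsUnit (M s).det := by
  have hdet : ContinuousAt (fun s => (M s).det) t :=
    (Continuous.matrix_det continuous_id).continuousAt.comp hM
  filter_upwards [hdet.eventually_ne h.ne_zero] with s hs using isUnit_iff_ne_zero.2 hs

theorem HasEntryDerivAt.inv {ι : Type*} [Fintype ι] [DecidableEq ι]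
    {M : ℝ → Matrix ι ι ℝ} {M' : Matrix ι ι ℝ} {t : ℝ}
    (hM : HasEntryDerivAt M M' t) (h : IsUnit (M t).det) :
    HasEntryDerivAt (fun s => (M s)⁻¹) (-((M t)⁻¹ * M' * (M t)⁻¹)) t := by
  have hcont := hM.continuousAt
  have hinv : ContinuousAt (fun s => (M s)⁻¹) t := by
    have hdet : ContinuousAt (fun s => (M s).det) t :=
      (Continuous.matrix_det continuous_id).continuousAt.comp hcont
    have hadj : ContinuousAt (fun s => (M s).adjugate) t :=
      (Continuous.matrix_adjugate continuous_id).continuousAt.comp hcont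
    simp only [Matrix.inv_def, Ring.inverse_eq_inv']
    exact (hdet.inv₀ h.ne_zero).smul hadj
  have hslope : Tendsto (fun s => (s - t)⁻¹ • (M s - M t)) (nhdsWithin t {t}ᶜ) (nhds M') := by
    refine tendsto_pi_nhds.2 fun i => tendsto_pi_nhds.2 fun j => ?_
    exact hasDerivAt_iff_tendsto_slope.1 (hM i j)
  have hlim : Tendsto (fun s => -((M s)⁻¹ * ((s - t)⁻¹ • (M s - M t)) * (M t)⁻¹))
      (nhdsWithin t {t}ᶜ) (nhds (-((M t)⁻¹ * M' * (M t)⁻¹))) :=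
    (((hinv.tendsto.mono_left nhdsWithin_le_nhds).mul hslope).mul tendsto_const_nhds).neg
  intro i j
  rw [hasDerivAt_iff_tendsto_slope]
  refine ((tendsto_pi_nhds.1 (tendsto_pi_nhds.1 hlim i) j)).congr' ?_
  filter_upwards [(hcont.eventually_isUnit_det h).filter_mono nhdsWithin_le_nhds] with s hs
  have e : -((M s)⁻¹ * ((s - t)⁻¹ • (M s - M t)) * (M t)⁻¹)
      = (s - t)⁻¹ • ((M s)⁻¹ - (M t)⁻¹) := by
    rw [Matrix.mul_smul, Matrix.smul_mul, ← smul_neg, Matrix.mul_sub, Matrix.sub_mul,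
      Matrix.nonsing_inv_mul _ hs, Matrix.mul_assoc, Matrix.mul_nonsing_inv _ h]
    simp
  rw [e]
  rfl

section Transition

variable {n : ℕ} {A : ℝ → Matrix (Fin n) (Fin n) ℝ} {Φ : ℝ → ℝ → Matrix (Fin n) (Fin n) ℝ}

theorem HasEntryDerivAt.inv_mul_of_ode {κ : Type*} {t₀ t : ℝ}
    (hΦ : HasEntryDerivAt (fun s => Φ s t₀) (A t * Φ t t₀) t) (hdet : IsUnit (Φ t t₀).det)
    {Y : ℝ → Matrix (Fin n) κ ℝ} {E : Matrix (Fin n) κ ℝ}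
    (hY : HasEntryDerivAt Y (A t * Y t + E) t) :
    HasEntryDerivAt (fun s => (Φ s t₀)⁻¹ * Y s) ((Φ t t₀)⁻¹ * E) t := by
  have h := (hΦ.inv hdet).mul hY
  have e : -((Φ t t₀)⁻¹ * (A t * Φ t t₀) * (Φ t t₀)⁻¹) * Y t + (Φ t t₀)⁻¹ * (A t * Y t + E)
      = (Φ t t₀)⁻¹ * E := by
    have : (Φ t t₀)⁻¹ * (A t * Φ t t₀) * (Φ t t₀)⁻¹ = (Φ t t₀)⁻¹ * A t := by
      rw [Matrix.mul_assoc, Matrix.mul_assoc, Matrix.mul_nonsing_inv _ hdet, Matrix.mul_one]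
    rw [this, Matrix.mul_add, Matrix.neg_mul, Matrix.mul_assoc]
    abel
  rwa [e] at h

/-- Uniqueness for a linear equation with a transition matrix; no regularity of `A` is
needed. -/
theorem eq_zero_of_ode {κ : Type*} (hΦ0 : ∀ t₀, Φ t₀ t₀ = 1)
    (hΦ : ∀ t₀ t, HasEntryDerivAt (fun s => Φ s t₀) (A t * Φ t t₀) t)
    {Y : ℝ → Matrix (Fin n) κ ℝ} (hY : ∀ t, HasEntryDerivAt Y (A t * Y t) t) {t₀ : ℝ}
    (h0 : Y t₀ = 0) (t : ℝ) : Y t = 0 := by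
  have hcont : Continuous Y := continuous_iff_continuousAt.2 fun t => (hY t).continuousAt
  have hclosed : IsClosed {t | Y t = 0} := isClosed_eq hcont continuous_const
  have hopen : IsOpen {t | Y t = 0} := by
    rw [isOpen_iff_mem_nhds]
    intro t₁ ht₁
    have hunit := (hΦ t₁ t₁).continuousAt.eventually_isUnit_det (by rw [hΦ0]; simp)
    obtain ⟨δ, hδ, hball⟩ := Metric.eventually_nhds_iff_ball.1 hunit
    filter_upwards [Metric.ball_mem_nhds t₁ hδ] with s hs
    have hzero : (Φ s t₁)⁻¹ * Y s = 0 := by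
      have hd : ∀ τ ∈ Metric.ball t₁ δ,
          HasEntryDerivAt (fun s => (Φ s t₁)⁻¹ * Y s) 0 τ := fun τ hτ => by
        have := (hΦ t₁ τ).inv_mul_of_ode (hball τ hτ) (E := 0) (by simpa using hY τ)
        simpa using this
      ext i j
      have hc := (convex_ball t₁ δ).is_const_of_fderivWithin_eq_zero (𝕜 := ℝ)
        (f := fun s => ((Φ s t₁)⁻¹ * Y s) i j)
        (fun τ hτ => ((hd τ hτ) i j).differentiableAt.differentiableWithinAt)
        (fun τ hτ => by
          rw [fderivWithin_of_isOpen Metric.isOpen_ball hτ]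
          have := ((hd τ hτ) i j).hasFDerivAt.fderiv
          rw [this]; ext; simp)
        hs (Metric.mem_ball_self hδ)
      have ht₁' : Y t₁ = 0 := ht₁
      simpa [ht₁'] using hc
    have hYs : Y s = Φ s t₁ * ((Φ s t₁)⁻¹ * Y s) := by
      rw [← Matrix.mul_assoc, Matrix.mul_nonsing_inv _ (hball s hs), Matrix.one_mul]
    show Y s = 0
    rw [hYs, hzero, Matrix.mul_zero]
  have huniv := IsClopen.eq_univ ⟨hclosed, hopen⟩ ⟨t₀, h0⟩
  have : t ∈ {t | Y t = 0} := huniv ▸ Set.mem_univ t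
  exact this

theorem transition_mul (hΦ0 : ∀ t₀, Φ t₀ t₀ = 1)
    (hΦ : ∀ t₀ t, HasEntryDerivAt (fun s => Φ s t₀) (A t * Φ t t₀) t) (t s t₀ : ℝ) :
    Φ t s * Φ s t₀ = Φ t t₀ := by
  refine sub_eq_zero.1 (eq_zero_of_ode (κ := Fin n) (Y := fun t => Φ t s * Φ s t₀ - Φ t t₀)
    hΦ0 hΦ (fun τ => ?_) (t₀ := s) (by simp [hΦ0]) t)
  intro i j
  have h := ((hΦ s τ).mul (hasEntryDerivAt_const (Φ s t₀) τ) i j).sub (hΦ t₀ τ i j)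
  refine HasDerivAt.congr_deriv h ?_
  simp [Matrix.mul_sub, Matrix.mul_assoc]

end Transition

theorem dotProduct_integral_mulVec {n : ℕ} {X : ℝ → Matrix (Fin n) (Fin n) ℝ} {s u : ℝ}
    (hX : ∀ a b, IntervalIntegrable (fun τ => X τ a b) volume s u) (v w : Fin n → ℝ) :
    v ⬝ᵥ ((Matrix.of fun a b => ∫ τ in s..u, X τ a b) *ᵥ w) = ∫ τ in s..u, v ⬝ᵥ (X τ *ᵥ w) := by
  have hi : ∀ a b, IntervalIntegrable (fun τ => v a * (X τ a b * w b)) volume s u :=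
    fun a b => ((hX a b).mul_const (w b)).const_mul (v a)
  simp only [dotProduct, Matrix.mulVec, Matrix.of_apply, Finset.mul_sum]
  rw [intervalIntegral.integral_finsetSum fun a _ => intervalIntegrable_fun_sum (hi a)]
  refine Finset.sum_congr rfl fun a _ => ?_
  rw [intervalIntegral.integral_finsetSum fun b _ => hi a b]
  refine Finset.sum_congr rfl fun b _ => ?_
  rw [intervalIntegral.integral_const_mul, intervalIntegral.integral_mul_const]

/-- A lower bound on the smallest singular value of a grammian bounds its quadratic form below. -/
theorem gram_lower_bound {n m : ℕ} {N : ℝ → Matrix (Fin m) (Fin n) ℝ} {t T b ε : ℝ} (hT : 0 < T)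
    (hb : 0 < b) (hε : 0 < ε)
    (hN : ∀ τ ∈ Set.Icc t (t + T), ∀ v, (N τ *ᵥ v) ⬝ᵥ (N τ *ᵥ v) ≤ b * (v ⬝ᵥ v))
    (hint : ∀ i j, IntervalIntegrable (fun τ => ((N τ)ᵀ * N τ) i j) volume t (t + T))
    (hσ : ε ≤ sigmaMin (Matrix.of fun i j => ∫ τ in t..(t + T), ((N τ)ᵀ * N τ) i j))
    (v : Fin n → ℝ) :
    ε ^ 2 / (b * T) * (v ⬝ᵥ v) ≤ ∫ τ in t..(t + T), (N τ *ᵥ v) ⬝ᵥ (N τ *ᵥ v) := by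
  set G := Matrix.of fun i j => ∫ τ in t..(t + T), ((N τ)ᵀ * N τ) i j with hG
  have htT : t ≤ t + T := by linarith
  have hq : ∀ u, u ⬝ᵥ (G *ᵥ u) = ∫ τ in t..(t + T), (N τ *ᵥ u) ⬝ᵥ (N τ *ᵥ u) := fun u => by
    rw [hG, dotProduct_integral_mulVec hint]
    simp only [mulVec_dotProduct_mulVec]
  have hGT : Gᵀ = G := by
    ext i j
    simp only [hG, Matrix.transpose_apply, Matrix.of_apply]
    congr 1
    ext τ
    simp only [Matrix.mul_apply, Matrix.transpose_apply, mul_comm]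
  have hq0 : ∀ u, 0 ≤ u ⬝ᵥ (G *ᵥ u) := fun u => by
    rw [hq]
    exact intervalIntegral.integral_nonneg htT fun τ _ => dotProduct_self_nonneg' _
  have hqup : ∀ u, u ⬝ᵥ (G *ᵥ u) ≤ b * T * (u ⬝ᵥ u) := fun u => by
    have hi : IntervalIntegrable (fun τ => (N τ *ᵥ u) ⬝ᵥ (N τ *ᵥ u)) volume t (t + T) := by
      simp only [mulVec_dotProduct_mulVec]
      simp only [dotProduct, Matrix.mulVec, Finset.mul_sum]
      exact intervalIntegrable_fun_sum fun i => intervalIntegrable_fun_sum fun j =>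
        ((hint i j).mul_const (u j)).const_mul (u i)
    rw [hq]
    refine (intervalIntegral.integral_mono_on htT hi intervalIntegrable_const
      fun τ hτ => hN τ hτ u).trans_eq ?_
    rw [intervalIntegral.integral_const, smul_eq_mul]
    ring
  have hσ2 : ε ^ 2 * (v ⬝ᵥ v) ≤ (G *ᵥ v) ⬝ᵥ (G *ᵥ v) := by
    have h := mul_eunorm_le_of_le_sigmaMin hσ v
    rw [← eunorm_sq, ← eunorm_sq, ← mul_pow]
    exact pow_le_pow_left₀ (mul_nonneg hε.le (eunorm_nonneg v)) h 2
  set g := G *ᵥ v with hg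
  have hsymm : v ⬝ᵥ (G *ᵥ g) = g ⬝ᵥ g := by
    rw [Matrix.dotProduct_mulVec, ← Matrix.mulVec_transpose, hGT]
  have hbT : 0 < b * T := by positivity
  have hexp := hq0 (v - (b * T)⁻¹ • g)
  rw [Matrix.mulVec_sub, Matrix.mulVec_smul, ← hg] at hexp
  simp only [sub_dotProduct, dotProduct_sub, smul_dotProduct, dotProduct_smul, smul_eq_mul,
    hsymm] at hexp
  have h1 : (b * T)⁻¹ * ((b * T)⁻¹ * (g ⬝ᵥ (G *ᵥ g))) ≤ (b * T)⁻¹ * (g ⬝ᵥ g) := by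
    refine mul_le_mul_of_nonneg_left ?_ (by positivity)
    rw [inv_mul_le_iff₀ hbT]
    exact hqup g
  rw [← hq, ← hg, div_mul_eq_mul_div, div_eq_inv_mul]
  have h2 := mul_le_mul_of_nonneg_left hσ2 (inv_nonneg.2 hbT.le)
  linarith

theorem stmt11 {n m p : ℕ}
    (A : ℝ → Matrix (Fin n) (Fin n) ℝ) (C : ℝ → Matrix (Fin m) (Fin n) ℝ)
    (Φ : ℝ → ℝ → Matrix (Fin n) (Fin n) ℝ)
    -- Φ is the state transition matrix of ẋ = A(t)x
    (hΦ0 : ∀ t₀ : ℝ, Φ t₀ t₀ = 1)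
    (hΦ : ∀ t₀ t : ℝ, ∀ a b : Fin n,
      HasDerivAt (fun s => Φ s t₀ a b) ((A t * Φ t t₀) a b) t)
    -- Assumption 1 (boundedness)
    (abar : ℝ) (habar : 1 ≤ abar)
    (hΦbdd : ∀ t₁ t₂ : ℝ, 0 ≤ t₁ → 0 ≤ t₂ → specNorm (Φ t₁ t₂) ≤ abar)
    (cbar : ℝ) (hcbar : 1 ≤ cbar)
    (hCbdd : ∀ t : ℝ, 0 ≤ t → specNorm (C t) ≤ cbar)
    -- integrability of the grammian integrand
    (hint : ∀ t₀ : ℝ, ∀ a b : Fin n, ∀ s u : ℝ,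
      IntervalIntegrable (fun τ => ((Φ τ t₀)ᵀ * (C τ)ᵀ * C τ * Φ τ t₀) a b) volume s u)
    -- uniform observability: σ_min(W_o(t, t+T)) ≥ ε for all t ≥ 0
    (hobs : ∃ ε T : ℝ, 0 < ε ∧ 0 < T ∧ ∀ t : ℝ, 0 ≤ t →
      ε ≤ sigmaMin (Matrix.of fun a b =>
        ∫ τ in t..(t + T), ((Φ τ t)ᵀ * (C τ)ᵀ * C τ * Φ τ t) a b))
    -- the feedback law
    (L : ℝ → Matrix (Fin n) (Fin m) ℝ)
    (hL : ∀ t, L t = Φ t 0 * (Φ t 0)ᵀ * (C t)ᵀ)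
    -- connected interconnection
    (Γ : Matrix (Fin p) (Fin p) ℝ)
    (hΓ : IsInterconnection Γ) (hconn : ConnectedMat Γ)
    (r : Fin p → ℝ) (hr1 : Matrix.vecMul r Γ = 0) (hr2 : ∑ i, r i = 1)
    -- solutions of the coupled array
    (x : Fin p → ℝ → Fin n → ℝ)
    (hx : ∀ i, ∀ t : ℝ, 0 ≤ t → ∀ a : Fin n,
      HasDerivAt (fun s => x i s a)
        (((A t).mulVec (x i t)
          + (L t * C t).mulVec
              (∑ j ∈ Finset.univ.filter (fun j => j ≠ i), Γ i j • (x j t - x i t))) a) t)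
    (xbar : ℝ → Fin n → ℝ)
    (hxbar : ∀ t, xbar t = (Φ t 0).mulVec (∑ j, r j • x j 0)) :
    ∃ c α : ℝ, 0 < c ∧ 0 < α ∧
      ∀ t : ℝ, 0 ≤ t → ∀ i, eunorm (x i t - xbar t) ≤ c * Real.exp (-α * t) := by
  have hΦd : ∀ t₀ t, HasEntryDerivAt (fun s => Φ s t₀) (A t * Φ t t₀) t := hΦ
  have hcomp := transition_mul hΦ0 hΦd
  have hdet : ∀ t, IsUnit (Φ t 0).det := fun t => by
    have h : Φ t 0 * Φ 0 t = 1 := by rw [hcomp, hΦ0]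
    exact (Matrix.isUnit_iff_isUnit_det _).1 (IsUnit.of_mul_eq_one _ h)
  set N : ℝ → Matrix (Fin m) (Fin n) ℝ := fun t => C t * Φ t 0 with hN
  have ha0 : 0 ≤ abar := by linarith
  have hc0 : 0 ≤ cbar := by linarith
  have hΦsq : ∀ t s, 0 ≤ t → 0 ≤ s → ∀ v : Fin n → ℝ,
      (Φ t s *ᵥ v) ⬝ᵥ (Φ t s *ᵥ v) ≤ abar ^ 2 * (v ⬝ᵥ v) := fun t s ht hs v => by
    rw [← eunorm_sq, ← eunorm_sq, ← mul_pow]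
    exact pow_le_pow_left₀ (eunorm_nonneg _)
      (eunorm_mulVec_le_of_specNorm_le (hΦbdd t s ht hs) v) 2
  have hCΦ : ∀ t s, 0 ≤ t → 0 ≤ s → ∀ v : Fin n → ℝ,
      ((C t * Φ t s) *ᵥ v) ⬝ᵥ ((C t * Φ t s) *ᵥ v) ≤ (cbar * abar) ^ 2 * (v ⬝ᵥ v) :=
    fun t s ht hs v => by
      rw [← Matrix.mulVec_mulVec, ← eunorm_sq, ← eunorm_sq, ← mul_pow]
      refine pow_le_pow_left₀ (eunorm_nonneg _) ?_ 2
      refine (eunorm_mulVec_le_of_specNorm_le (hCbdd t ht) _).trans ?_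
      rw [mul_assoc]
      exact mul_le_mul_of_nonneg_left
        (eunorm_mulVec_le_of_specNorm_le (hΦbdd t s ht hs) v) hc0
  have hNfrob : ∀ t, 0 ≤ t → frobSq (N t) ≤ n * (cbar * abar) ^ 2 := fun t ht => by
    rw [← frobSq_transpose]
    calc frobSq (N t)ᵀ ≤ ∑ _a : Fin n, (cbar * abar) ^ 2 := by
          refine Finset.sum_le_sum fun a _ => ?_
          have h := hCΦ t 0 ht le_rfl (Pi.single a 1)
          simpa [dotProduct, sq, hN, Pi.single_apply] using h
      _ = n * (cbar * abar) ^ 2 := by simp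
  have hgram : ∀ t₀ τ, (Φ τ t₀)ᵀ * (C τ)ᵀ * C τ * Φ τ t₀
      = (C τ * Φ τ t₀)ᵀ * (C τ * Φ τ t₀) := fun t₀ τ => by
    rw [Matrix.transpose_mul]; simp only [Matrix.mul_assoc]
  simp only [hgram] at hint hobs
  obtain ⟨ε, T, hε, hT, hobs⟩ := hobs
  have hca : 0 < (cbar * abar) ^ 2 := by positivity
  have hPE : ∀ t, 0 ≤ t → ∀ v : Fin n → ℝ,
      ε ^ 2 / ((cbar * abar) ^ 2 * T) / abar ^ 2 * (v ⬝ᵥ v)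
        ≤ ∫ τ in t..(t + T), (N τ *ᵥ v) ⬝ᵥ (N τ *ᵥ v) := by
    intro t ht v
    have h := gram_lower_bound (N := fun τ => C τ * Φ τ t) hT hca hε
      (fun τ hτ u => hCΦ τ t (ht.trans hτ.1) ht u) (fun a b => hint t a b t (t + T))
      (hobs t ht) (Φ t 0 *ᵥ v)
    simp only [Matrix.mulVec_mulVec, Matrix.mul_assoc, hcomp] at h
    refine le_trans ?_ h
    have hv : v = Φ 0 t *ᵥ (Φ t 0 *ᵥ v) := by
      rw [Matrix.mulVec_mulVec, hcomp, hΦ0, Matrix.one_mulVec]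
    have h2 := hΦsq 0 t le_rfl ht (Φ t 0 *ᵥ v)
    rw [← hv] at h2
    rw [div_mul_eq_mul_div, div_le_iff₀ (by positivity), mul_assoc]
    refine mul_le_mul_of_nonneg_left ?_ (by positivity)
    rw [mul_comm]
    exact h2
  obtain ⟨P, c, hc, hP, hPlow, hPΓ⟩ := exists_lyapunov_matrix hΓ hconn hr1 hr2
  set z₀ : Fin n → ℝ := ∑ j, r j • x j 0 with hz₀
  set X : ℝ → Matrix (Fin n) (Fin p) ℝ := fun t => Matrix.of fun a i => x i t a with hX
  set Z : ℝ → Matrix (Fin n) (Fin p) ℝ := fun t => (Φ t 0)⁻¹ * X t with hZ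
  set W : ℝ → Matrix (Fin p) (Fin n) ℝ := fun t => (Z t)ᵀ - Matrix.vecMulVec 1 z₀ with hW
  have hΓ1 := hΓ.mulVec_one
  have hcoupling : ∀ i t, (∑ j ∈ Finset.univ.filter (fun j => j ≠ i), Γ i j • (x j t - x i t))
      = fun b => (X t * Γᵀ) b i := by
    intro i t
    have hrow : ∑ j, Γ i j = 0 := by
      simpa [Matrix.mulVec, dotProduct] using congrFun hΓ1 i
    ext b
    rw [Finset.sum_filter_of_ne fun j _ hj => by rintro rfl; simp at hj, Finset.sum_apply]
    simp only [Pi.smul_apply, Pi.sub_apply, smul_eq_mul, mul_sub, Finset.sum_sub_distrib,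
      ← Finset.sum_mul, hrow, zero_mul, sub_zero, Matrix.mul_apply, hX, Matrix.of_apply,
      Matrix.transpose_apply]
    exact Finset.sum_congr rfl fun j _ => mul_comm _ _
  have hXd : ∀ t, 0 ≤ t → HasEntryDerivAt X (A t * X t + L t * C t * (X t * Γᵀ)) t := by
    intro t ht a i
    have h := hx i t ht a
    rw [hcoupling] at h
    exact h
  have hXZ : ∀ t, X t = Φ t 0 * Z t := fun t => by
    rw [hZ]
    simp only
    rw [← Matrix.mul_assoc, Matrix.mul_nonsing_inv _ (hdet t), Matrix.one_mul]
  have hZd : ∀ t, 0 ≤ t → HasEntryDerivAt Z ((N t)ᵀ * N t * Z t * Γᵀ) t := by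
    intro t ht
    have h := (hΦd 0 t).inv_mul_of_ode (hdet t) (hXd t ht)
    have e : (Φ t 0)⁻¹ * (L t * C t * (X t * Γᵀ)) = (N t)ᵀ * N t * Z t * Γᵀ := by
      rw [hL, hXZ, hN]
      simp only [Matrix.transpose_mul]
      have h1 : (Φ t 0)⁻¹ * (Φ t 0 * (Φ t 0)ᵀ * (C t)ᵀ * C t * (Φ t 0 * Z t * Γᵀ))
          = ((Φ t 0)⁻¹ * Φ t 0) * ((Φ t 0)ᵀ * (C t)ᵀ * C t * (Φ t 0 * Z t * Γᵀ)) := by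
        simp only [Matrix.mul_assoc]
      rw [h1, Matrix.nonsing_inv_mul _ (hdet t), Matrix.one_mul]
      simp only [Matrix.mul_assoc]
    rwa [e] at h
  have hWd : ∀ t, 0 ≤ t → HasEntryDerivAt W (Γ * W t * ((N t)ᵀ * N t)) t := by
    intro t ht
    have e : Γ * W t * ((N t)ᵀ * N t) = ((N t)ᵀ * N t * Z t * Γᵀ)ᵀ := by
      have h1 : Γ * W t = Γ * (Z t)ᵀ := by
        rw [hW]
        simp only
        rw [Matrix.mul_sub, Matrix.mul_vecMulVec, hΓ1, Matrix.zero_vecMulVec, sub_zero]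
      rw [h1]
      simp only [Matrix.transpose_mul, Matrix.transpose_transpose, Matrix.mul_assoc]
    rw [e]
    exact fun i a => ((hZd t ht).transpose i a).sub_const _
  have hWr : ∀ t, 0 ≤ t → r ᵥ* W t = 0 := by
    intro t ht
    ext a
    have hd : ∀ τ, 0 ≤ τ → HasDerivAt (fun s => (r ᵥ* W s) a) 0 τ := by
      intro τ hτ
      have h : HasDerivAt (fun s => (r ᵥ* W s) a) ((r ᵥ* (Γ * W τ * ((N τ)ᵀ * N τ))) a) τ :=
        HasDerivAt.fun_sum (u := Finset.univ) fun i _ => (hWd τ hτ i a).const_mul (r i)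
      rwa [Matrix.mul_assoc, ← Matrix.vecMul_vecMul, hr1, Matrix.zero_vecMul] at h
    have hconst := constant_of_has_deriv_right_zero (f := fun s => (r ᵥ* W s) a) (a := 0) (b := t)
      (fun τ hτ => (hd τ hτ.1).continuousAt.continuousWithinAt)
      (fun τ hτ => (hd τ hτ.1).hasDerivWithinAt) t ⟨ht, le_rfl⟩
    rw [hconst]
    have h0 : Z 0 = X 0 := by rw [hZ]; simp [hΦ0]
    simp only [hW, h0, hX]
    rw [Matrix.vecMul_sub, Matrix.vecMul_vecMulVec]
    simp [Matrix.vecMul, dotProduct, hz₀, Finset.sum_apply, hr2]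
  obtain ⟨K, α, hK, hα, hdecay⟩ := exp_decay_of_persistent_excitation hT (by positivity) hNfrob
    (hint 0) hPE hc hP hPlow hPΓ hWd hWr
  refine ⟨abar * Real.sqrt K, α / 2, by positivity, by positivity, fun t ht i => ?_⟩
  have hxi : x i t - xbar t = Φ t 0 *ᵥ W t i := by
    have h1 : x i t = Φ t 0 *ᵥ (Z t)ᵀ i := by
      ext a
      exact congrFun (congrFun (hXZ t) a) i
    have h2 : W t i = (Z t)ᵀ i - z₀ := by
      ext a
      simp [hW]
    rw [h2, Matrix.mulVec_sub, ← h1, hxbar]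
  rw [hxi]
  refine (eunorm_mulVec_le_of_specNorm_le (hΦbdd t 0 ht le_rfl) _).trans ?_
  rw [mul_assoc]
  refine mul_le_mul_of_nonneg_left ?_ ha0
  rw [eunorm, Real.sqrt_le_left (by positivity), mul_pow, Real.sq_sqrt hK.le, ← Real.exp_nat_mul]
  refine (row_le_frobSq (W t) i).trans ((hdecay t ht).trans_eq ?_)
  congr 2
  push_cast
  ring
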